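/- For 1 ≤ i ≤ k let pⁱ : ℝⁿ → ℝ be a polynomial of degree at most d_i, and let δ > 0 and ε₁, …, ε_k > 0. Let X, Y¹, …, Y^k be independent standard Gaussian random vectors on ℝⁿ, and let M be the k×k random matrix with entries M_{ij} = ⟨∇pⁱ(X), Y^j⟩. Then Pr(|pⁱ(X)| < ε_i for all i, and |det M| > δ) ≤ 2^{k+1}·(∏_{i=1}^k d_i)·(∏_{i=1}^k ε_i) / (δ·V_k), where V_k = 2·π^{(k+1)/2} / Γ((k+1)/2) is the surface measure of the unit sphere S^k ⊂ ℝ^{k+1}. -/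

import Mathlib

open MeasureTheory ProbabilityTheory

/-- The standard Gaussian measure on `ℝⁿ`. -/
noncomputable def stdGaussian (n : ℕ) : Measure (Fin n → ℝ) :=
  Measure.pi fun _ => gaussianReal 0 1


/-- exponent vectors of weighted degree at most `N`. -/
noncomputable def wBox {n : ℕ} (d : Fin n → ℕ) (N : ℕ) : Finset (Fin n → ℕ) :=
  (Fintype.piFinset (fun _ : Fin n => Finset.range (N + 1))).filter (fun a => ∑ i, a i * d i ≤ N)

lemma mem_wBox {n : ℕ} {d : Fin n → ℕ} (hd : ∀ i, 1 ≤ d i) {N : ℕ} {a : Fin n → ℕ} :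
    a ∈ wBox d N ↔ ∑ i, a i * d i ≤ N := by
  unfold wBox
  simp only [Finset.mem_filter, Fintype.mem_piFinset, Finset.mem_range, and_iff_right_iff_imp]
  intro h i
  have h1 : a i * d i ≤ ∑ i, a i * d i :=
    Finset.single_le_sum (f := fun i => a i * d i) (fun _ _ => Nat.zero_le _) (Finset.mem_univ i)
  have h2 : a i ≤ a i * d i := Nat.le_mul_of_pos_right _ (hd i)
  omega

lemma card_wBox_le {n : ℕ} (d : Fin n → ℕ) (N : ℕ) : (wBox d N).card ≤ (N + 1) ^ n := by
  unfold wBox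
  refine (Finset.card_filter_le _ _).trans ?_
  simp

lemma card_wBox_one_le {n : ℕ} (d : Fin n → ℕ) (hd : ∀ i, 1 ≤ d i) (N : ℕ) :
    (wBox (fun _ : Fin n => 1) N).card ≤ (∏ i, d i) * (wBox d N).card := by
  classical
  have : (wBox (fun _ : Fin n => 1) N).card ≤
      ((Fintype.piFinset (fun i => Finset.range (d i))) ×ˢ wBox d N).card := by
    apply Finset.card_le_card_of_injOn (fun b => (fun i => b i % d i, fun i => b i / d i))
    · intro b hb
      rw [Finset.mem_coe, mem_wBox (fun _ => le_rfl)] at hb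
      simp only [Finset.coe_product, Set.mem_prod, Finset.mem_coe, Fintype.mem_piFinset,
        Finset.mem_range, mem_wBox hd]
      refine ⟨fun i => Nat.mod_lt _ (hd i), le_trans (Finset.sum_le_sum fun i _ => ?_) hb⟩
      rw [mul_one]
      exact Nat.div_mul_le_self _ _
    · intro b _ b' _ h
      simp only [Prod.mk.injEq] at h
      funext i
      have h1 := congrFun h.1 i
      have h2 := congrFun h.2 i
      rw [← Nat.mod_add_div (b i) (d i), ← Nat.mod_add_div (b' i) (d i), h1, h2]
  simpa [Finset.card_product] using this

lemma exists_card_lt (n D : ℕ) (hD : 1 ≤ D) : ∃ N,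
    D * (wBox (fun _ : Fin n => 1) (N + D)).card < (D + 1) * (wBox (fun _ : Fin n => 1) N).card := by
  by_contra! hcon
  set c : ℕ → ℝ := fun N => ((wBox (fun _ : Fin n => 1) N).card : ℝ) with hc
  have hDpos : (0 : ℝ) < D := by exact_mod_cast hD
  set q : ℝ := (D + 1) / D with hq
  have hq1 : 1 < q := by rw [hq, one_lt_div hDpos]; linarith
  have hrec : ∀ N, q * c N ≤ c (N + D) := by
    intro N
    have h : ((D : ℝ) + 1) * c N ≤ D * c (N + D) := by
      simp only [hc]; exact_mod_cast hcon N
    rw [hq, div_mul_eq_mul_div, div_le_iff₀ hDpos]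
    linarith
  have hpow : ∀ j : ℕ, q ^ j ≤ c (j * D) := by
    intro j
    induction j with
    | zero =>
      have : 0 < (wBox (fun _ : Fin n => 1) 0).card := by
        apply Finset.card_pos.2
        exact ⟨0, (mem_wBox (fun _ => le_rfl)).2 (by simp)⟩
      simp only [pow_zero, zero_mul, hc]
      exact_mod_cast this
    | succ j ih =>
      have := hrec (j * D)
      rw [pow_succ', add_mul, one_mul]
      exact (mul_le_mul_of_nonneg_left ih (by linarith)).trans this
  have hup : ∀ j : ℕ, c (j * D) ≤ ((j : ℝ) * D + 1) ^ n := by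
    intro j
    simp only [hc]
    exact_mod_cast card_wBox_le (fun _ : Fin n => 1) (j * D)
  have hlim := tendsto_pow_const_div_const_pow_of_one_lt n hq1
  have hbd : ∀ j : ℕ, 1 ≤ j → 1 / ((D : ℝ) + 1) ^ n ≤ (j : ℝ) ^ n / q ^ j := by
    intro j hj
    have hj' : (1 : ℝ) ≤ j := by exact_mod_cast hj
    rw [div_le_div_iff₀ (by positivity) (by positivity), one_mul, ← mul_pow]
    refine ((hpow j).trans (hup j)).trans ?_
    apply pow_le_pow_left₀ (by positivity)
    nlinarith
  have h0 : 1 / ((D : ℝ) + 1) ^ n ≤ 0 := by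
    apply ge_of_tendsto hlim
    filter_upwards [Filter.eventually_ge_atTop 1] with j hj using hbd j hj
  have : 0 < 1 / ((D : ℝ) + 1) ^ n := by positivity
  linarith

lemma exists_relation {n : ℕ} (d : Fin n → ℕ) (hd : ∀ i, 1 ≤ d i)
    (f : Fin n → MvPolynomial (Fin n) ℝ) (hf : ∀ i, (f i).totalDegree ≤ d i)
    (g : MvPolynomial (Fin n) ℝ) (hg : g.totalDegree ≤ 1) :
    ∃ (T : Finset (Fin n → ℕ)) (c : (Fin n → ℕ) → Fin (∏ i, d i + 1) → ℝ),
      (∃ a ∈ T, ∃ j, c a j ≠ 0) ∧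
      ∑ j, ∑ a ∈ T, MvPolynomial.C (c a j) * ((∏ i, f i ^ a i) * g ^ (j : ℕ)) = 0 := by
  classical
  set D := ∏ i, d i with hDdef
  have hD : 1 ≤ D := Nat.one_le_iff_ne_zero.2 (Finset.prod_ne_zero_iff.2 fun i _ => by
    have := hd i; omega)
  obtain ⟨N, hN⟩ := exists_card_lt n D hD
  set T := wBox d N
  set S := wBox (fun _ : Fin n => 1) (N + D) with hS
  have hcard : S.card < T.card * (D + 1) := by
    have h1 := card_wBox_one_le d hd N
    have h2 : D * S.card < D * (T.card * (D + 1)) := by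
      calc _ < _ := hN
        _ ≤ (D + 1) * (D * T.card) := Nat.mul_le_mul_left _ h1
        _ = _ := by ring
    exact lt_of_mul_lt_mul_left h2 (Nat.zero_le _)
  let v : T × Fin (D + 1) → MvPolynomial (Fin n) ℝ := fun x =>
    (∏ i, f i ^ x.1.1 i) * g ^ (x.2 : ℕ)
  let w : T × Fin (D + 1) → (S → ℝ) := fun x s =>
    (v x).coeff (Finsupp.equivFunOnFinite.symm s.1)
  have hdep : ¬ LinearIndependent ℝ w := by
    intro hli
    have := hli.fintype_card_le_finrank
    simp at this
    omega
  rw [Fintype.not_linearIndependent_iff] at hdep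
  obtain ⟨c, hc, ⟨x, hx⟩⟩ := hdep
  refine ⟨T, fun a j => if h : a ∈ T then c (⟨a, h⟩, j) else 0, ⟨x.1.1, x.1.2, x.2, ?_⟩, ?_⟩
  · simpa using hx
  have hdegv : ∀ x, (v x).totalDegree ≤ N + D := by
    intro x
    have hx := (mem_wBox hd).1 x.1.2
    refine (MvPolynomial.totalDegree_mul _ _).trans (add_le_add ?_ ?_)
    · refine (MvPolynomial.totalDegree_finsetProd _ _).trans (le_trans ?_ hx)
      refine Finset.sum_le_sum fun i _ => ?_
      exact (MvPolynomial.totalDegree_pow _ _).trans (Nat.mul_le_mul_left _ (hf i))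
    · refine (MvPolynomial.totalDegree_pow _ _).trans ?_
      have := x.2.2
      nlinarith
  have hzero : ∑ x, c x • v x = 0 := by
    ext m
    rw [MvPolynomial.coeff_zero, MvPolynomial.coeff_sum]
    by_cases hm : (m : Fin n → ℕ) ∈ S
    · have := congrFun hc ⟨m, hm⟩
      simpa [w] using this
    · apply Finset.sum_eq_zero
      intro x _
      rw [MvPolynomial.coeff_smul, MvPolynomial.coeff_eq_zero_of_totalDegree_lt, smul_zero]
      rw [hS, mem_wBox (fun _ => le_rfl), not_le] at hm
      simp only [mul_one] at hm
      refine (hdegv x).trans_lt (hm.trans_le (le_of_eq ?_))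
      exact (Finsupp.sum_fintype m (fun _ e => e) (fun _ => rfl)).symm
  rw [← hzero, Fintype.sum_prod_type_right]
  refine Finset.sum_congr rfl fun j _ => ?_
  rw [← Finset.sum_coe_sort T]
  refine Finset.sum_congr rfl fun a _ => ?_
  simp [v, MvPolynomial.smul_eq_C_mul]


/-- the continuous linear map of a matrix -/
noncomputable def matCLM {m : ℕ} (A : Matrix (Fin m) (Fin m) ℝ) : (Fin m → ℝ) →L[ℝ] (Fin m → ℝ) :=
  LinearMap.toContinuousLinearMap (Matrix.toLin' A)

lemma matCLM_det {m : ℕ} (A : Matrix (Fin m) (Fin m) ℝ) : (matCLM A).det = A.det := by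
  simp [matCLM, ContinuousLinearMap.det]

lemma hasStrictFDerivAt_matCLM {m : ℕ} {F : (Fin m → ℝ) → (Fin m → ℝ)}
    {A : Matrix (Fin m) (Fin m) ℝ} {x : Fin m → ℝ}
    (h : ∀ i, HasStrictFDerivAt (fun x => F x i)
      (∑ j, A i j • (ContinuousLinearMap.proj j : (Fin m → ℝ) →L[ℝ] ℝ)) x) :
    HasStrictFDerivAt F (matCLM A) x := by
  have h1 := hasStrictFDerivAt_pi.2 h
  refine h1.congr_fderiv ?_
  ext v i
  simp [matCLM, Matrix.toLin'_apply, Matrix.mulVec, dotProduct]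

lemma hasStrictFDerivAt_eval {n : ℕ} (p : MvPolynomial (Fin n) ℝ) (x : Fin n → ℝ) :
    HasStrictFDerivAt (fun x => MvPolynomial.eval x p)
      (∑ j, MvPolynomial.eval x (MvPolynomial.pderiv j p) •
        (ContinuousLinearMap.proj j : (Fin n → ℝ) →L[ℝ] ℝ)) x := by
  induction p using MvPolynomial.induction_on with
  | C a => simpa using hasStrictFDerivAt_const a x
  | add p q hp hq =>
    simp only [map_add, add_smul, Finset.sum_add_distrib]
    exact hp.add hq
  | mul_X p i hp =>
    have hX : HasStrictFDerivAt (fun x : Fin n → ℝ => x i)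
      (ContinuousLinearMap.proj i : (Fin n → ℝ) →L[ℝ] ℝ) x :=
      (ContinuousLinearMap.proj i : (Fin n → ℝ) →L[ℝ] ℝ).hasStrictFDerivAt
    have := hp.mul hX
    simp only [map_mul, MvPolynomial.eval_X]
    refine this.congr_fderiv ?_
    ext v
    simp [Derivation.leibniz, Pi.single_apply, MvPolynomial.pderiv_X, add_mul,
      Finset.sum_add_distrib, Finset.mul_sum, apply_ite]
    exact Finset.sum_congr rfl fun _ _ => by ring

lemma exists_separating {n : ℕ} (S : Finset (Fin n → ℝ)) :
    ∃ g : MvPolynomial (Fin n) ℝ, g.totalDegree ≤ 1 ∧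
      Set.InjOn (fun x => MvPolynomial.eval x g) S := by
  classical
  obtain ⟨l, hl⟩ := Module.exists_dual_forall_apply_ne_zero (K := ℝ)
    (fun z : {z : S × S // z.1 ≠ z.2} => z.1.1.1 - z.1.2.1)
    (fun z h => z.2 (Subtype.ext (sub_eq_zero.1 h)))
  have hlx : ∀ x, l x = ∑ i, l (Pi.single i 1) * x i := by
    intro x
    conv_lhs => rw [pi_eq_sum_univ' x]
    simp [mul_comm]
  refine ⟨∑ i, MvPolynomial.C (l (Pi.single i 1)) * MvPolynomial.X i, ?_, ?_⟩
  · refine MvPolynomial.totalDegree_finsetSum_le fun i _ => ?_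
    refine (MvPolynomial.totalDegree_mul _ _).trans ?_
    simp
  · intro x hx y hy hxy
    by_contra hne
    apply hl ⟨(⟨x, hx⟩, ⟨y, hy⟩), fun h => hne (congrArg Subtype.val h)⟩
    simp only [map_sub]
    rw [sub_eq_zero, hlx x, hlx y]
    simpa using hxy

lemma exists_eval_ne_zero {n : ℕ} {p : MvPolynomial (Fin n) ℝ} (hp : p ≠ 0) (y : Fin n → ℝ)
    {U : Set (Fin n → ℝ)} (hU : U ∈ nhds y) : ∃ z ∈ U, MvPolynomial.eval z p ≠ 0 := by
  by_contra! hcon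
  apply hp
  obtain ⟨r, hr, hb⟩ := Metric.mem_nhds_iff.1 hU
  apply MvPolynomial.funext_set (fun i => Metric.ball (y i) r)
  · intro i
    rw [Real.ball_eq_Ioo]
    exact Set.Ioo_infinite (by linarith)
  · intro z hz
    rw [map_zero]
    apply hcon z (hb _)
    rw [ball_pi _ hr]
    exact hz

lemma bezout_count {n : ℕ} (d : Fin n → ℕ) (hd : ∀ i, 1 ≤ d i)
    (f : Fin n → MvPolynomial (Fin n) ℝ) (hf : ∀ i, (f i).totalDegree ≤ d i)
    (S : Finset (Fin n → ℝ)) (y : Fin n → ℝ)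
    (hS : ∀ x ∈ S, ∀ i, MvPolynomial.eval x (f i) = y i)
    (hdet : ∀ x ∈ S, (Matrix.of fun i j =>
      MvPolynomial.eval x (MvPolynomial.pderiv j (f i))).det ≠ 0) :
    S.card ≤ ∏ i, d i := by
  classical
  obtain ⟨g, hg, hinj⟩ := exists_separating S
  obtain ⟨T, c, ⟨a, ha, j, hj⟩, hrel⟩ := exists_relation d hd f hf g hg
  set F : (Fin n → ℝ) → (Fin n → ℝ) := fun x i => MvPolynomial.eval x (f i) with hF
  have hFd : ∀ x ∈ S, Filter.map F (nhds x) = nhds y := by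
    intro x hx
    have h1 : HasStrictFDerivAt F (matCLM (Matrix.of fun i j =>
      MvPolynomial.eval x (MvPolynomial.pderiv j (f i)))) x :=
      hasStrictFDerivAt_matCLM fun i => hasStrictFDerivAt_eval (f i) x
    have h2 : (matCLM (Matrix.of fun i j =>
      MvPolynomial.eval x (MvPolynomial.pderiv j (f i)))).det ≠ 0 := by
      rw [matCLM_det]; exact hdet x hx
    have h3 : HasStrictFDerivAt F ((ContinuousLinearMap.toContinuousLinearEquivOfDetNeZero _ h2 :
      (Fin n → ℝ) ≃L[ℝ] (Fin n → ℝ)) : (Fin n → ℝ) →L[ℝ] (Fin n → ℝ)) x := by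
      simpa using h1
    have h4 := h3.map_nhds_eq_of_equiv
    rw [h4]
    congr 1
    funext i
    exact hS x hx i
  -- separate values of g
  have hgc : Continuous (fun x => MvPolynomial.eval x g) := MvPolynomial.continuous_eval g
  obtain ⟨V, hV, hVd⟩ := Set.Finite.t2_separation (S.image (fun x => MvPolynomial.eval x g)).finite_toSet
  set U : Set (Fin n → ℝ) := ⋂ x ∈ S, F '' ((fun x => MvPolynomial.eval x g) ⁻¹' V (MvPolynomial.eval x g))
  have hU : U ∈ nhds y := by
    rw [Filter.biInter_finset_mem]
    intro x hx
    rw [← hFd x hx]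
    apply Filter.image_mem_map
    apply hgc.continuousAt.preimage_mem_nhds
    exact (hV _).2.mem_nhds (hV _).1
  let P : Fin (∏ i, d i + 1) → MvPolynomial (Fin n) ℝ := fun j =>
    ∑ a ∈ T, MvPolynomial.monomial (Finsupp.equivFunOnFinite.symm a) (c a j)
  have hPj : P j ≠ 0 := by
    intro h0
    apply hj
    have := congrArg (MvPolynomial.coeff (Finsupp.equivFunOnFinite.symm a)) h0
    simpa [P, MvPolynomial.coeff_sum, MvPolynomial.coeff_monomial, ha] using this
  have hPeval : ∀ j z, MvPolynomial.eval z (P j) = ∑ a ∈ T, c a j * ∏ i, z i ^ a i := by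
    intro j z
    simp [P, MvPolynomial.eval_monomial, Finsupp.prod_fintype]
  obtain ⟨z, hzU, hz⟩ := exists_eval_ne_zero hPj y hU
  let Q : Polynomial ℝ := ∑ j, Polynomial.C (MvPolynomial.eval z (P j)) * Polynomial.X ^ (j : ℕ)
  have hQcoeff : Q.coeff j = MvPolynomial.eval z (P j) := by
    simp only [Q, Polynomial.finsetSum_coeff, Polynomial.coeff_C_mul_X_pow]
    rw [Finset.sum_eq_single j]
    · simp
    · intro b _ hb
      rw [if_neg]
      intro h
      exact hb (Fin.ext h.symm)
    · simp
  have hQ0 : Q ≠ 0 := by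
    intro h
    apply hz
    rw [← hQcoeff, h, Polynomial.coeff_zero]
  have hQdeg : Q.natDegree ≤ ∏ i, d i := by
    apply Polynomial.natDegree_sum_le_of_forall_le
    intro j _
    refine (Polynomial.natDegree_C_mul_X_pow_le _ _).trans ?_
    have := j.2
    omega
  have hpts : ∀ x ∈ S, ∃ x', F x' = z ∧ MvPolynomial.eval x' g ∈ V (MvPolynomial.eval x g) := by
    intro x hx
    have := Set.mem_iInter₂.1 hzU x hx
    obtain ⟨x', h1, h2⟩ := this
    exact ⟨x', h2, h1⟩
  choose! w hw1 hw2 using hpts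
  have hroot : ∀ x ∈ S, MvPolynomial.eval (w x) g ∈ Q.roots.toFinset := by
    intro x hx
    rw [Multiset.mem_toFinset, Polynomial.mem_roots hQ0, Polynomial.IsRoot]
    have h := congrArg (MvPolynomial.eval (w x)) hrel
    simp only [map_sum, map_mul, MvPolynomial.eval_C, map_prod, map_pow, map_zero] at h
    simp only [Q, Polynomial.eval_finsetSum, Polynomial.eval_mul, Polynomial.eval_C,
      Polynomial.eval_pow, Polynomial.eval_X, hPeval]
    rw [← h]
    refine Finset.sum_congr rfl fun j _ => ?_
    rw [Finset.sum_mul]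
    refine Finset.sum_congr rfl fun a _ => ?_
    rw [← hw1 x hx]
    ring
  have hcard : S.card ≤ Q.roots.toFinset.card := by
    apply Finset.card_le_card_of_injOn (fun x => MvPolynomial.eval (w x) g) hroot
    intro x hx x' hx' heq
    by_contra hne
    have hne' : MvPolynomial.eval x g ≠ MvPolynomial.eval x' g := fun h => hne (hinj hx hx' h)
    have := hVd (by simpa using ⟨x, hx, rfl⟩) (by simpa using ⟨x', hx', rfl⟩) hne'
    exact Set.disjoint_left.1 this (hw2 x hx) (by have := hw2 x' hx'; simp only at heq; rwa [← heq] at this)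
  exact hcard.trans ((Multiset.toFinset_card_le _).trans ((Polynomial.card_roots' Q).trans hQdeg))


lemma area_mult {m : ℕ} (Φ : (Fin m → ℝ) → (Fin m → ℝ))
    (Φ' : (Fin m → ℝ) → (Fin m → ℝ) →L[ℝ] (Fin m → ℝ)) (A : Set (Fin m → ℝ))
    (hA : MeasurableSet A)
    (hd : ∀ x ∈ A, HasStrictFDerivAt Φ (Φ' x) x) (hdet : ∀ x ∈ A, (Φ' x).det ≠ 0) (N : ℕ)
    (hN : ∀ (y : Fin m → ℝ) (S : Finset (Fin m → ℝ)), (∀ x ∈ S, x ∈ A ∧ Φ x = y) → S.card ≤ N)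
    (g : (Fin m → ℝ) → ENNReal) (hg : Measurable g) :
    ∫⁻ x in A, ENNReal.ofReal |(Φ' x).det| * g (Φ x) ≤ N * ∫⁻ y, g y := by
  classical
  rcases A.eq_empty_or_nonempty with rfl | hne
  · simp
  have hloc : ∀ x ∈ A, ∃ U : Set (Fin m → ℝ), IsOpen U ∧ x ∈ U ∧ Set.InjOn Φ U := by
    intro x hx
    have h3 : HasStrictFDerivAt Φ ((ContinuousLinearMap.toContinuousLinearEquivOfDetNeZero _
      (hdet x hx) : (Fin m → ℝ) ≃L[ℝ] (Fin m → ℝ)) : (Fin m → ℝ) →L[ℝ] (Fin m → ℝ)) x := by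
      simpa using hd x hx
    refine ⟨(h3.toOpenPartialHomeomorph Φ).source, (h3.toOpenPartialHomeomorph Φ).open_source,
      h3.mem_toOpenPartialHomeomorph_source, ?_⟩
    have := (h3.toOpenPartialHomeomorph Φ).injOn
    simpa using this
  choose! U hUo hUx hUi using hloc
  obtain ⟨t, htA, htc, hcov⟩ := TopologicalSpace.countable_cover_nhdsWithin
    (s := A) (f := U) (fun x hx => mem_nhdsWithin_of_mem_nhds ((hUo x hx).mem_nhds (hUx x hx)))
  have htne : t.Nonempty := by
    obtain ⟨x, hx⟩ := hne
    obtain ⟨i, hi, _⟩ := Set.mem_iUnion₂.1 (hcov hx)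
    exact ⟨i, hi⟩
  obtain ⟨s, rfl⟩ := htc.exists_eq_range htne
  have hsA : ∀ n, s n ∈ A := fun n => htA ⟨n, rfl⟩
  set V : ℕ → Set (Fin m → ℝ) := disjointed (fun n => U (s n)) with hV
  have hVm : ∀ n, MeasurableSet (V n) :=
    MeasurableSet.disjointed (fun n => (hUo _ (hsA n)).measurableSet)
  have hVU : ∀ n, V n ⊆ U (s n) := fun n => disjointed_subset _ n
  have hVd : Pairwise (Function.onFun Disjoint V) := disjoint_disjointed _
  have hAV : A = ⋃ n, (A ∩ V n) := by
    rw [← Set.inter_iUnion, hV, iUnion_disjointed]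
    refine (Set.inter_eq_left.2 ?_).symm
    intro x hx
    simpa using hcov hx
  have hBm : ∀ n, MeasurableSet (A ∩ V n) := fun n => hA.inter (hVm n)
  have hBd : ∀ n, ∀ x ∈ A ∩ V n, HasFDerivWithinAt Φ (Φ' x) (A ∩ V n) x := fun n x hx =>
    (hd x hx.1).hasFDerivAt.hasFDerivWithinAt
  have hBi : ∀ n, Set.InjOn Φ (A ∩ V n) := fun n =>
    (hUi _ (hsA n)).mono (Set.inter_subset_right.trans (hVU n))
  have hIm : ∀ n, MeasurableSet (Φ '' (A ∩ V n)) := fun n =>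
    measurable_image_of_fderivWithin (hBm n) (hBd n) (hBi n)
  calc ∫⁻ x in A, ENNReal.ofReal |(Φ' x).det| * g (Φ x)
      = ∑' n, ∫⁻ x in A ∩ V n, ENNReal.ofReal |(Φ' x).det| * g (Φ x) := by
        conv_lhs => rw [hAV]
        apply lintegral_iUnion hBm
        intro i j hij
        exact (hVd hij).mono Set.inter_subset_right Set.inter_subset_right
    _ = ∑' n, ∫⁻ y, (Φ '' (A ∩ V n)).indicator g y := by
        congr 1
        funext n
        rw [← lintegral_image_eq_lintegral_abs_det_fderiv_mul volume (hBm n) (hBd n) (hBi n) g,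
          lintegral_indicator (hIm n)]
    _ = ∫⁻ y, ∑' n, (Φ '' (A ∩ V n)).indicator g y := by
        rw [lintegral_tsum]
        exact fun n => (hg.indicator (hIm n)).aemeasurable
    _ ≤ ∫⁻ y, N * g y := by
        apply lintegral_mono
        intro y
        simp only
        rw [ENNReal.tsum_eq_iSup_sum]
        refine iSup_le fun T => ?_
        have h1 : ∑ n ∈ T, (Φ '' (A ∩ V n)).indicator g y =
            ((T.filter fun n => y ∈ Φ '' (A ∩ V n)).card : ENNReal) * g y := by
          simp only [Set.indicator_apply]
          rw [← Finset.sum_filter, Finset.sum_const, nsmul_eq_mul]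
        rw [h1]
        gcongr
        set T' := T.filter fun n => y ∈ Φ '' (A ∩ V n) with hT'
        have h2 : ∀ n ∈ T', ∃ x, x ∈ A ∩ V n ∧ Φ x = y := fun n hn => (Finset.mem_filter.1 hn).2
        choose! w hw1 hw2 using h2
        have hinj : Set.InjOn w T' := by
          intro a ha b hb hab
          by_contra hne'
          have h3 := hw1 a ha
          rw [hab] at h3
          exact Set.disjoint_left.1 (hVd hne') h3.2 (hw1 b hb).2
        rw [← Finset.card_image_of_injOn hinj]
        apply hN y
        intro x hx
        obtain ⟨a, ha, rfl⟩ := Finset.mem_image.1 hx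
        exact ⟨(hw1 a ha).1, hw2 a ha⟩
    _ = N * ∫⁻ y, g y := lintegral_const_mul _ hg


/-- Euclidean norm -/
noncomputable def nrm {m : ℕ} (u : Fin m → ℝ) : ℝ := Real.sqrt (∑ a, u a ^ 2)

/-- normalization -/
noncomputable def nmz {m : ℕ} (u : Fin m → ℝ) : Fin m → ℝ := fun a => (nrm u)⁻¹ * u a

lemma continuous_nrm {m : ℕ} : Continuous (nrm : (Fin m → ℝ) → ℝ) := by
  unfold nrm; fun_prop

lemma measurable_nmz {m : ℕ} : Measurable (nmz : (Fin m → ℝ) → (Fin m → ℝ)) := by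
  unfold nmz
  have := (continuous_nrm (m := m)).measurable
  fun_prop

lemma nrm_sq {m : ℕ} (u : Fin m → ℝ) : nrm u ^ 2 = ∑ a, u a ^ 2 :=
  Real.sq_sqrt (Finset.sum_nonneg fun _ _ => sq_nonneg _)

lemma sum_nmz_sq {m : ℕ} {u : Fin m → ℝ} (hu : 0 < nrm u) : ∑ a, nmz u a ^ 2 = 1 := by
  simp only [nmz, mul_pow]
  rw [← Finset.mul_sum, ← nrm_sq]
  field_simp

/-- Jacobian-type matrix: first row `θ`, other rows the gradients. -/
noncomputable def jacM {k : ℕ} (q : Fin k → MvPolynomial (Fin (k + 1)) ℝ) (θ : Fin (k + 1) → ℝ) :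
    Matrix (Fin (k + 1)) (Fin (k + 1)) ℝ :=
  Fin.cons θ (fun i a => MvPolynomial.eval θ (MvPolynomial.pderiv a (q i)))

/-- Jacobian matrix of the polar type map. -/
noncomputable def jacB {k : ℕ} (q : Fin k → MvPolynomial (Fin (k + 1)) ℝ) (u : Fin (k + 1) → ℝ) :
    Matrix (Fin (k + 1)) (Fin (k + 1)) ℝ :=
  Fin.cons (nmz u) (fun i a => (nrm u)⁻¹ * (MvPolynomial.eval (nmz u) (MvPolynomial.pderiv a (q i))
    - (∑ b, MvPolynomial.eval (nmz u) (MvPolynomial.pderiv b (q i)) * nmz u b) * nmz u a))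

/-- the polar type map. -/
noncomputable def polM {k : ℕ} (q : Fin k → MvPolynomial (Fin (k + 1)) ℝ) (u : Fin (k + 1) → ℝ) :
    Fin (k + 1) → ℝ :=
  Fin.cons (nrm u) (fun i => MvPolynomial.eval (nmz u) (q i))

lemma det_jacB {k : ℕ} (q : Fin k → MvPolynomial (Fin (k + 1)) ℝ) (u : Fin (k + 1) → ℝ) :
    (jacB q u).det = (nrm u)⁻¹ ^ k * (jacM q (nmz u)).det := by
  let c : Fin (k + 1) → ℝ := Fin.cons 0 (fun i =>
    - (∑ b, MvPolynomial.eval (nmz u) (MvPolynomial.pderiv b (q i)) * nmz u b))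
  let v : Fin (k + 1) → ℝ := Fin.cons 1 (fun _ => (nrm u)⁻¹)
  let B' : Matrix (Fin (k + 1)) (Fin (k + 1)) ℝ := Matrix.of fun i j =>
    jacM q (nmz u) i j + c i * jacM q (nmz u) 0 j
  have h1 : B'.det = (jacM q (nmz u)).det :=
    Matrix.det_eq_of_forall_row_eq_smul_add_const c 0 rfl (fun i j => rfl)
  have h2 : jacB q u = Matrix.of fun i j => v i * B' i j := by
    ext i j
    refine Fin.cases ?_ (fun i => ?_) i
    · simp [jacB, v, B', c, jacM]
    · simp only [jacB, v, B', c, jacM, Matrix.of_apply, Fin.cons_succ, Fin.cons_zero]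
      ring
  rw [h2, Matrix.det_mul_column, h1, Fin.prod_univ_succ]
  simp [v]

lemma hasStrictFDerivAt_nrm {m : ℕ} {u : Fin m → ℝ} (hu : 0 < nrm u) :
    HasStrictFDerivAt (nrm : (Fin m → ℝ) → ℝ)
      (∑ j, nmz u j • (ContinuousLinearMap.proj j : (Fin m → ℝ) →L[ℝ] ℝ)) u := by
  have h1 : HasStrictFDerivAt (fun u : Fin m → ℝ => ∑ a, u a ^ 2)
      (∑ j, (2 * u j) • (ContinuousLinearMap.proj j : (Fin m → ℝ) →L[ℝ] ℝ)) u := by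
    apply HasStrictFDerivAt.fun_sum
    intro j _
    have := ((ContinuousLinearMap.proj j : (Fin m → ℝ) →L[ℝ] ℝ).hasStrictFDerivAt (x := u)).pow 2
    refine this.congr_fderiv ?_
    ext v
    simp
  have hne : ∑ a, u a ^ 2 ≠ 0 := by rw [← nrm_sq]; positivity
  have h2 := h1.sqrt hne
  refine h2.congr_fderiv ?_
  ext v
  simp only [_root_.smul_apply, _root_.sum_apply, smul_eq_mul,
    Finset.mul_sum, nmz]
  refine Finset.sum_congr rfl fun j _ => ?_
  change 1 / (2 * nrm u) * _ = _
  field_simp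

lemma hasStrictFDerivAt_nmz {m : ℕ} {u : Fin m → ℝ} (hu : 0 < nrm u) (b : Fin m) :
    HasStrictFDerivAt (fun u : Fin m → ℝ => nmz u b)
      ((nrm u)⁻¹ • ((ContinuousLinearMap.proj b : (Fin m → ℝ) →L[ℝ] ℝ) - nmz u b •
        ∑ j, nmz u j • (ContinuousLinearMap.proj j : (Fin m → ℝ) →L[ℝ] ℝ))) u := by
  have h1 := hasStrictFDerivAt_nrm hu
  have h2 := (hasStrictDerivAt_inv hu.ne').comp_hasStrictFDerivAt u h1
  have h3 := h2.mul ((ContinuousLinearMap.proj b : (Fin m → ℝ) →L[ℝ] ℝ).hasStrictFDerivAt (x := u))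
  refine h3.congr_fderiv ?_
  ext v
  simp [nmz]
  field_simp
  ring

lemma hasStrictFDerivAt_polM {k : ℕ} (q : Fin k → MvPolynomial (Fin (k + 1)) ℝ)
    {u : Fin (k + 1) → ℝ} (hu : 0 < nrm u) :
    HasStrictFDerivAt (polM q) (matCLM (jacB q u)) u := by
  apply hasStrictFDerivAt_matCLM
  intro i
  refine Fin.cases ?_ (fun i => ?_) i
  · exact hasStrictFDerivAt_nrm hu
  · have h1 : HasStrictFDerivAt (nmz : (Fin (k + 1) → ℝ) → _) _ u :=
      hasStrictFDerivAt_pi.2 fun b => hasStrictFDerivAt_nmz hu b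
    have h2 := (hasStrictFDerivAt_eval (q i) (nmz u)).comp u h1
    refine h2.congr_fderiv ?_
    ext v
    simp only [jacB, Fin.cons_succ, ContinuousLinearMap.comp_apply,
      _root_.sum_apply, _root_.smul_apply, ContinuousLinearMap.proj_apply,
      ContinuousLinearMap.pi_apply, _root_.sub_apply, smul_eq_mul]
    generalize hs : ∑ j, nmz u j * v j = s
    generalize hG : (fun b => MvPolynomial.eval (nmz u) (MvPolynomial.pderiv b (q i))) = G
    have hG' : ∀ b, MvPolynomial.eval (nmz u) (MvPolynomial.pderiv b (q i)) = G b :=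
      fun b => congrFun hG b
    simp only [hG']
    generalize hC : ∑ b, G b * nmz u b = C
    have e1 : ∑ j, G j * ((nrm u)⁻¹ * (v j - nmz u j * s)) =
        (nrm u)⁻¹ * (∑ j, G j * v j - C * s) := by
      rw [← hC, Finset.sum_mul, ← Finset.sum_sub_distrib, Finset.mul_sum]
      exact Finset.sum_congr rfl fun j _ => by ring
    have e2 : ∑ j, (nrm u)⁻¹ * (G j - C * nmz u j) * v j =
        (nrm u)⁻¹ * (∑ j, G j * v j - C * s) := by
      rw [← hs, Finset.mul_sum, ← Finset.sum_sub_distrib, Finset.mul_sum]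
      exact Finset.sum_congr rfl fun j _ => by ring
    rw [e1, e2]

lemma sphere_count {k : ℕ} (q : Fin k → MvPolynomial (Fin (k + 1)) ℝ) (d : Fin k → ℕ)
    (hd : ∀ i, 1 ≤ d i) (hq : ∀ i, (q i).totalDegree ≤ d i)
    (y : Fin (k + 1) → ℝ) (S : Finset (Fin (k + 1) → ℝ))
    (hS : ∀ u ∈ S, 0 < nrm u ∧ (jacM q (nmz u)).det ≠ 0 ∧ polM q u = y) :
    S.card ≤ 2 * ∏ i, d i := by
  classical
  have hinj : Set.InjOn nmz (S : Set (Fin (k + 1) → ℝ)) := by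
    intro u hu v hv huv
    have h1 : nrm u = y 0 := congrFun (hS u hu).2.2 0
    have h2 : nrm v = y 0 := congrFun (hS v hv).2.2 0
    have h3 := (hS u hu).1
    funext a
    have h4 := congrFun huv a
    simp only [nmz] at h4
    rw [h2, ← h1] at h4
    exact mul_left_cancel₀ (inv_ne_zero h3.ne') h4
  rw [← Finset.card_image_of_injOn hinj]
  let f : Fin (k + 1) → MvPolynomial (Fin (k + 1)) ℝ :=
    Fin.cons (∑ a, MvPolynomial.X a ^ 2) q
  let d' : Fin (k + 1) → ℕ := Fin.cons 2 d
  have hprod : ∏ i, d' i = 2 * ∏ i, d i := by simp [Fin.prod_univ_succ, d']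
  rw [← hprod]
  apply bezout_count d' _ f _ _ (Fin.cons 1 (fun i => y i.succ))
  · intro x hx i
    obtain ⟨u, hu, rfl⟩ := Finset.mem_image.1 hx
    refine Fin.cases ?_ (fun i => ?_) i
    · simp [f, sum_nmz_sq (hS u hu).1]
    · simp only [f, Fin.cons_succ]
      exact congrFun (hS u hu).2.2 i.succ
  · intro x hx
    obtain ⟨u, hu, rfl⟩ := Finset.mem_image.1 hx
    let v : Fin (k + 1) → ℝ := Fin.cons 2 (fun _ => 1)
    have h2 : (Matrix.of fun i j =>
      MvPolynomial.eval (nmz u) (MvPolynomial.pderiv j (f i))) =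
        Matrix.of fun i j => v i * jacM q (nmz u) i j := by
      ext i j
      refine Fin.cases ?_ (fun i => ?_) i
      · simp [f, v, jacM, MvPolynomial.pderiv_X, Derivation.leibniz_pow, Pi.single_apply, apply_ite]
      · simp [f, v, jacM]
    rw [h2, Matrix.det_mul_column, Fin.prod_univ_succ]
    simpa [v] using (hS u hu).2.1
  · intro i
    refine Fin.cases ?_ (fun i => ?_) i
    · simp [d']
    · simpa [d'] using hd i
  · intro i
    refine Fin.cases ?_ (fun i => ?_) i
    · simp only [f, d', Fin.cons_zero]
      refine MvPolynomial.totalDegree_finsetSum_le fun a _ => ?_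
      simp
    · simpa [f, d'] using hq i

/-- the weight function. -/
noncomputable def wt {k : ℕ} (ε : Fin k → ℝ) (y : Fin (k + 1) → ℝ) : ENNReal :=
  (Set.Ioo (0 : ℝ) 1).indicator (fun t => ENNReal.ofReal (t ^ k)) (y 0) *
    (Set.univ.pi fun i : Fin k => Set.Ioo (-ε i) (ε i)).indicator 1 (fun i => y i.succ)

lemma measurable_wt {k : ℕ} (ε : Fin k → ℝ) : Measurable (wt ε) := by
  unfold wt
  apply Measurable.mul
  · exact (Measurable.indicator (by fun_prop) measurableSet_Ioo).comp (measurable_pi_apply 0)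
  · apply (Measurable.indicator measurable_one (MeasurableSet.univ_pi fun i => measurableSet_Ioo)).comp
    fun_prop

lemma lintegral_wt {k : ℕ} (ε : Fin k → ℝ) (hε : ∀ i, 0 < ε i) :
    ∫⁻ y, wt ε y = ENNReal.ofReal ((∏ i, (2 * ε i)) / (k + 1)) := by
  have h1 := (volume_preserving_piFinSuccAbove (fun _ : Fin (k + 1) => ℝ) 0)
  have h2 : ∀ y, wt ε y = (fun z : ℝ × (Fin k → ℝ) =>
      (Set.Ioo (0 : ℝ) 1).indicator (fun t => ENNReal.ofReal (t ^ k)) z.1 *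
      (Set.univ.pi fun i : Fin k => Set.Ioo (-ε i) (ε i)).indicator 1 z.2)
      (MeasurableEquiv.piFinSuccAbove (fun _ : Fin (k + 1) => ℝ) 0 y) := by
    intro y
    simp only [wt, MeasurableEquiv.piFinSuccAbove_apply, Fin.insertNthEquiv_zero,
      Fin.consEquiv_symm_apply]
    rfl
  rw [lintegral_congr h2]
  refine (h1.lintegral_comp_emb (MeasurableEquiv.measurableEmbedding _) (fun z : ℝ × (Fin k → ℝ) =>
      (Set.Ioo (0 : ℝ) 1).indicator (fun t => ENNReal.ofReal (t ^ k)) z.1 *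
      (Set.univ.pi fun i : Fin k => Set.Ioo (-ε i) (ε i)).indicator 1 z.2)).trans ?_
  have hm : MeasurableSet (Set.univ.pi fun i : Fin k => Set.Ioo (-ε i) (ε i)) :=
    MeasurableSet.univ_pi fun i => measurableSet_Ioo
  have h0 : (volume : Measure (ℝ × (Fin k → ℝ))) = (volume : Measure ℝ).prod volume := rfl
  change ∫⁻ z : ℝ × (Fin k → ℝ), _ ∂(volume : Measure (ℝ × (Fin k → ℝ))) = _
  rw [h0, lintegral_prod_mul (Measurable.indicator (by fun_prop) measurableSet_Ioo).aemeasurable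
    (measurable_one.indicator hm).aemeasurable, lintegral_indicator measurableSet_Ioo,
    lintegral_indicator_one hm, Real.volume_pi_Ioo]
  have h3 : ∫⁻ t in Set.Ioo (0 : ℝ) 1, ENNReal.ofReal (t ^ k) = ENNReal.ofReal (1 / (k + 1)) := by
    rw [← ofReal_integral_eq_lintegral_ofReal]
    · rw [← integral_Ioc_eq_integral_Ioo, ← intervalIntegral.integral_of_le zero_le_one,
        integral_pow]
      simp
    · have : IntervalIntegrable (fun t : ℝ => t ^ k) volume 0 1 := by
        apply Continuous.intervalIntegrable; fun_prop
      exact ((intervalIntegrable_iff_integrableOn_Ioo_of_le zero_le_one).1 this)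
    · filter_upwards [ae_restrict_mem measurableSet_Ioo] with t ht
      exact pow_nonneg ht.1.le _
  rw [h3, ← ENNReal.ofReal_prod_of_nonneg (fun i _ => by have := hε i; linarith),
    ← ENNReal.ofReal_mul (by positivity)]
  congr 1
  rw [div_mul_eq_mul_div, one_mul]
  congr 1
  exact Finset.prod_congr rfl fun i _ => by ring

lemma measurable_det_jacM {k : ℕ} (q : Fin k → MvPolynomial (Fin (k + 1)) ℝ) :
    Measurable fun θ => (jacM q θ).det := by
  apply Continuous.measurable
  apply Continuous.matrix_det
  refine continuous_matrix fun i j => ?_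
  refine Fin.cases ?_ (fun i => ?_) i
  · exact continuous_apply j
  · exact MvPolynomial.continuous_eval _

open Classical in
lemma sphere_lemma {k : ℕ} (q : Fin k → MvPolynomial (Fin (k + 1)) ℝ) (d : Fin k → ℕ)
    (hd : ∀ i, 1 ≤ d i) (hq : ∀ i, (q i).totalDegree ≤ d i) (ε : Fin k → ℝ) (hε : ∀ i, 0 < ε i) :
    ∫⁻ u in {u | 0 < nrm u ∧ nrm u < 1},
      (if ∀ i, |MvPolynomial.eval (nmz u) (q i)| < ε i then
        ENNReal.ofReal |(jacM q (nmz u)).det| else 0) ≤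
    ((2 * ∏ i, d i : ℕ) : ENNReal) * ENNReal.ofReal ((∏ i, (2 * ε i)) / (k + 1)) := by
  have hnm := (continuous_nrm (m := k + 1)).measurable
  set B : Set (Fin (k + 1) → ℝ) := {u | 0 < nrm u ∧ nrm u < 1} with hB
  set A : Set (Fin (k + 1) → ℝ) := B ∩ {u | (jacM q (nmz u)).det ≠ 0} with hA
  have hBm : MeasurableSet B :=
    (measurableSet_lt measurable_const hnm).inter (measurableSet_lt hnm measurable_const)
  have hAm : MeasurableSet A := by
    apply hBm.inter
    have h1 := (measurable_det_jacM q).comp (measurable_nmz (m := k + 1))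
    exact (measurableSet_eq_fun h1 measurable_const).compl
  rw [← lintegral_wt ε hε]
  refine le_trans ?_ (area_mult (polM q) (fun u => matCLM (jacB q u)) A hAm
    (fun u hu => hasStrictFDerivAt_polM q hu.1.1) ?_ _ ?_ _ (measurable_wt ε))
  · rw [← lintegral_indicator hBm, ← lintegral_indicator hAm]
    apply lintegral_mono
    intro u
    by_cases hu : u ∈ A
    · rw [Set.indicator_of_mem hu, Set.indicator_of_mem hu.1]
      split_ifs with h
      · have h1 : wt ε (polM q u) = ENNReal.ofReal (nrm u ^ k) := by
          simp only [wt, polM, Fin.cons_zero, Fin.cons_succ]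
          rw [Set.indicator_of_mem (show nrm u ∈ Set.Ioo (0:ℝ) 1 from hu.1), Set.indicator_of_mem]
          · simp
          · intro i _
            exact abs_lt.1 (h i)
        rw [h1, matCLM_det, det_jacB, ← ENNReal.ofReal_mul (abs_nonneg _)]
        apply le_of_eq
        congr 1
        have h2 : 0 < nrm u := hu.1.1
        rw [abs_mul, abs_of_pos (pow_pos (inv_pos.2 h2) k), inv_pow]
        field_simp
      · exact zero_le
    · by_cases hu' : u ∈ B
      · have h0 : (jacM q (nmz u)).det = 0 := by
          by_contra h
          exact hu ⟨hu', h⟩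
        rw [Set.indicator_of_mem hu', h0]
        simp
      · rw [Set.indicator_of_notMem hu']
        exact zero_le
  · intro u hu
    have h2 : 0 < nrm u := hu.1.1
    rw [matCLM_det, det_jacB]
    exact mul_ne_zero (by positivity) hu.2
  · intro y S hS
    exact sphere_count q d hd hq y S fun u hu => ⟨(hS u hu).1.1.1, (hS u hu).1.2, (hS u hu).2⟩


lemma volume_unit_ball (k : ℕ) :
    volume {u : Fin (k + 1) → ℝ | 0 < nrm u ∧ nrm u < 1} =
      ENNReal.ofReal (Real.pi ^ (((k : ℝ) + 1) / 2) / Real.Gamma (((k : ℝ) + 1) / 2 + 1)) := by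
  have h1 := volume_sum_rpow_lt_one (Fin (k + 1)) (p := 2) (by norm_num)
  have h2 : {u : Fin (k + 1) → ℝ | 0 < nrm u ∧ nrm u < 1} =
      {x : Fin (k + 1) → ℝ | ∑ i, |x i| ^ (2 : ℝ) < 1} \ {0} := by
    ext u
    have e1 : ∑ i, |u i| ^ (2 : ℝ) = ∑ i, u i ^ 2 := by simp
    have e2 : nrm u = 0 ↔ u = 0 := by
      rw [nrm, Real.sqrt_eq_zero (Finset.sum_nonneg fun _ _ => sq_nonneg _),
        Finset.sum_eq_zero_iff_of_nonneg (fun _ _ => sq_nonneg _)]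
      simp [funext_iff]
    have e3 : nrm u < 1 ↔ ∑ i, u i ^ 2 < 1 := by
      rw [nrm, Real.sqrt_lt' one_pos, one_pow]
    have e4 : 0 < nrm u ↔ nrm u ≠ 0 := by
      have : 0 ≤ nrm u := Real.sqrt_nonneg _
      exact ⟨fun h => h.ne', fun h => lt_of_le_of_ne this h.symm⟩
    simp only [Set.mem_ofPred_eq, Set.mem_sdiff, Set.mem_singleton_iff]
    rw [e1, e4, e3, Ne, e2, and_comm]
  rw [h2, measure_sdiff_null (by simp), h1]
  congr 1
  have e5 : (2 : ℝ) * Real.Gamma (1 / 2 + 1) = Real.pi ^ (1 / 2 : ℝ) := by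
    rw [Real.Gamma_add_one (by norm_num), Real.Gamma_one_half_eq, Real.sqrt_eq_rpow]
    ring
  rw [e5, ← Real.rpow_natCast, ← Real.rpow_mul Real.pi_pos.le]
  simp only [Fintype.card_fin]
  push_cast
  congr 2
  ring

/-- the action of a matrix on tuples of vectors -/
noncomputable def rotL {m n : ℕ} (Q : Matrix (Fin m) (Fin m) ℝ) :
    (Fin m → Fin n → ℝ) →L[ℝ] (Fin m → Fin n → ℝ) :=
  LinearMap.toContinuousLinearMap
    { toFun := fun Z a l => ∑ b, Q a b * Z b l
      map_add' := by
        intro Z W; funext a l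
        simp [mul_add, Finset.sum_add_distrib]
      map_smul' := by
        intro c Z; funext a l
        simp only [Pi.smul_apply, smul_eq_mul, RingHom.id_apply, Finset.mul_sum]
        exact Finset.sum_congr rfl fun b _ => by ring }

lemma rotL_apply {m n : ℕ} (Q : Matrix (Fin m) (Fin m) ℝ) (Z : Fin m → Fin n → ℝ)
    (a : Fin m) (l : Fin n) : rotL Q Z a l = ∑ b, Q a b * Z b l := rfl

instance instProbStdG (n : ℕ) : IsProbabilityMeasure (_root_.stdGaussian n) := by
  unfold _root_.stdGaussian; infer_instance

lemma charFunDual_one (L : StrongDual ℝ ℝ) :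
    charFunDual (gaussianReal 0 1) L = Complex.exp (-((L 1 : ℝ) : ℂ) ^ 2 / 2) := by
  have h : charFunDual (gaussianReal 0 1) L = charFun (gaussianReal 0 1) (L 1) := by
    rw [charFunDual_apply, charFun_apply_real]
    refine integral_congr_ae (Filter.Eventually.of_forall fun v => ?_)
    have : L v = L 1 * v := by
      conv_lhs => rw [← mul_one v, ← smul_eq_mul, map_smul, smul_eq_mul]
      ring
    simp only [this]
    push_cast
    rfl
  rw [h, charFun_gaussianReal]
  congr 1
  push_cast
  ring

lemma charFunDual_gauss {m n : ℕ} (L : StrongDual ℝ (Fin m → Fin n → ℝ)) :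
    charFunDual (Measure.pi fun _ : Fin m => _root_.stdGaussian n) L =
      Complex.exp (-((∑ l, ∑ a, (L (Pi.single a (Pi.single l 1))) ^ 2 : ℝ) : ℂ) / 2) := by
  rw [charFunDual_pi]
  have h : ∀ a : Fin m, charFunDual (_root_.stdGaussian n)
      (L ∘SL (ContinuousLinearMap.single ℝ (fun _ : Fin m => Fin n → ℝ) a)) =
      ∏ l, Complex.exp (-(((L (Pi.single a (Pi.single l 1))) : ℝ) : ℂ) ^ 2 / 2) := by
    intro a
    unfold _root_.stdGaussian
    rw [charFunDual_pi]
    refine Finset.prod_congr rfl fun l _ => ?_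
    rw [charFunDual_one]
    rfl
  simp_rw [h]
  rw [Finset.prod_comm]
  simp_rw [← Complex.exp_sum]
  congr 1
  push_cast
  simp_rw [← Finset.sum_neg_distrib, Finset.sum_div]

lemma gauss_rot {m n : ℕ} (Q : Matrix (Fin m) (Fin m) ℝ) (hQ : Q * Q.transpose = 1) :
    (Measure.pi fun _ : Fin m => _root_.stdGaussian n).map (rotL Q) =
      Measure.pi fun _ : Fin m => _root_.stdGaussian n := by
  have : IsProbabilityMeasure ((Measure.pi fun _ : Fin m => _root_.stdGaussian n).map (rotL Q)) :=
    Measure.isProbabilityMeasure_map (rotL Q).continuous.measurable.aemeasurable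
  apply Measure.ext_of_charFunDual
  ext L
  rw [charFunDual_map, charFunDual_gauss, charFunDual_gauss]
  congr 4
  refine Finset.sum_congr rfl fun l _ => ?_
  set c : Fin m → ℝ := fun a => L (Pi.single a (Pi.single l 1)) with hc
  have h1 : ∀ a, (L ∘SL rotL Q) (Pi.single a (Pi.single l 1)) = (Matrix.vecMul c Q) a := by
    intro a
    have : rotL Q (Pi.single a (Pi.single l 1)) = ∑ b, Q b a • (Pi.single b (Pi.single l 1) :
        Fin m → Fin n → ℝ) := by
      funext b l'
      rw [rotL_apply]
      simp [Finset.sum_apply, Pi.single_apply, apply_ite, ite_apply]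
      split_ifs with h
      · exact fun h' => absurd h h'
      · exact fun h' => absurd h' h
    rw [ContinuousLinearMap.comp_apply, this, map_sum]
    simp only [map_smul, smul_eq_mul, Matrix.vecMul, dotProduct, hc]
    exact Finset.sum_congr rfl fun b _ => by ring
  simp_rw [h1]
  have h2 : ∀ v : Fin m → ℝ, ∑ a, v a ^ 2 = dotProduct v v := by
    intro v; simp [dotProduct, sq]
  rw [h2, h2, ← Matrix.dotProduct_mulVec, ← Matrix.mulVec_transpose, Matrix.mulVec_mulVec, hQ,
    Matrix.one_mulVec]

lemma exists_rot {k : ℕ} (u : Fin (k + 1) → ℝ) (hu : ∑ a, u a ^ 2 = 1) :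
    ∃ Q : Matrix (Fin (k + 1)) (Fin (k + 1)) ℝ, Q * Q.transpose = 1 ∧ Q.transpose * Q = 1 ∧
      ∀ a, Q a 0 = u a := by
  obtain ⟨b, hb⟩ := Orthonormal.exists_orthonormalBasis_extension_of_card_eq (𝕜 := ℝ)
    (E := EuclideanSpace ℝ (Fin (k + 1))) (ι := Fin (k + 1)) (by simp)
    (v := fun _ => WithLp.toLp 2 u) (s := {0}) (by
      constructor
      · intro i
        simp [EuclideanSpace.norm_eq, hu]
      · intro i j hij
        exact absurd (Subsingleton.elim i j) hij)
  have h0 := hb 0 rfl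
  let Q : Matrix (Fin (k + 1)) (Fin (k + 1)) ℝ := Matrix.of fun a j => b j a
  have h1 : Q.transpose * Q = 1 := by
    ext i j
    have := orthonormal_iff_ite.1 b.orthonormal i j
    simp only [Matrix.mul_apply, Matrix.transpose_apply, Q, Matrix.of_apply, Matrix.one_apply]
    rw [← this]
    simp [PiLp.inner_apply, mul_comm]
  refine ⟨Q, mul_eq_one_comm.1 h1, h1, fun a => ?_⟩
  simp [Q, h0]

/-- composition of a polynomial with the linear map `u ↦ ∑ u_a Z_a`. -/
noncomputable def compZ {m n : ℕ} (Z : Fin m → Fin n → ℝ) (p : MvPolynomial (Fin n) ℝ) :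
    MvPolynomial (Fin m) ℝ :=
  MvPolynomial.bind₁ (fun l => ∑ a, MvPolynomial.C (Z a l) * MvPolynomial.X a) p

/-- linear combination -/
def linZ {m n : ℕ} (u : Fin m → ℝ) (Z : Fin m → Fin n → ℝ) : Fin n → ℝ :=
  fun l => ∑ a, Z a l * u a

lemma eval_compZ {m n : ℕ} (Z : Fin m → Fin n → ℝ) (p : MvPolynomial (Fin n) ℝ) (u : Fin m → ℝ) :
    MvPolynomial.eval u (compZ Z p) = MvPolynomial.eval (linZ u Z) p := by
  unfold compZ
  induction p using MvPolynomial.induction_on with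
  | C a => simp
  | add p q hp hq => simp [hp, hq]
  | mul_X p i hp => simp [hp, linZ]

lemma eval_pderiv_compZ {m n : ℕ} (Z : Fin m → Fin n → ℝ) (p : MvPolynomial (Fin n) ℝ)
    (u : Fin m → ℝ) (a : Fin m) :
    MvPolynomial.eval u (MvPolynomial.pderiv a (compZ Z p)) =
      ∑ l, MvPolynomial.eval (linZ u Z) (MvPolynomial.pderiv l p) * Z a l := by
  induction p using MvPolynomial.induction_on with
  | C a => simp [compZ]
  | add p q hp hq =>
    have : compZ Z (p + q) = compZ Z p + compZ Z q := by simp [compZ]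
    simp [this, hp, hq, add_mul, Finset.sum_add_distrib]
  | mul_X p i hp =>
    have : compZ Z (p * MvPolynomial.X i) = compZ Z p *
        ∑ a, MvPolynomial.C (Z a i) * MvPolynomial.X a := by simp [compZ]
    rw [this, Derivation.leibniz]
    simp only [smul_eq_mul, map_add, map_mul, hp, eval_compZ, map_sum, MvPolynomial.eval_C,
      MvPolynomial.eval_X, Derivation.leibniz, MvPolynomial.pderiv_C, MvPolynomial.pderiv_X,
      mul_zero, add_zero, add_mul, Finset.sum_add_distrib, Pi.single_apply]
    congr 1
    · simp [apply_ite]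
    · change linZ u Z i * _ = _
      rw [Finset.mul_sum]
      exact Finset.sum_congr rfl fun l _ => by ring

lemma totalDegree_compZ {m n : ℕ} (Z : Fin m → Fin n → ℝ) (p : MvPolynomial (Fin n) ℝ) :
    (compZ Z p).totalDegree ≤ p.totalDegree := by
  have : compZ Z p = ∑ s ∈ p.support, MvPolynomial.C (p.coeff s) *
      ∏ l, (∑ a, MvPolynomial.C (Z a l) * MvPolynomial.X a) ^ s l := by
    unfold compZ
    rw [MvPolynomial.bind₁, MvPolynomial.aeval_def, MvPolynomial.eval₂_eq']
    rfl
  rw [this]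
  refine MvPolynomial.totalDegree_finsetSum_le fun s hs => ?_
  refine (MvPolynomial.totalDegree_mul _ _).trans ?_
  rw [MvPolynomial.totalDegree_C, zero_add]
  refine (MvPolynomial.totalDegree_finsetProd _ _).trans ?_
  have h := MvPolynomial.le_totalDegree hs
  rw [Finsupp.sum_fintype _ _ (fun _ => rfl)] at h
  refine le_trans (Finset.sum_le_sum fun l _ => ?_) h
  refine (MvPolynomial.totalDegree_pow _ _).trans ?_
  have h1 : (∑ a, MvPolynomial.C (Z a l) * MvPolynomial.X a :
      MvPolynomial (Fin m) ℝ).totalDegree ≤ 1 := by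
    refine MvPolynomial.totalDegree_finsetSum_le fun a _ => ?_
    refine (MvPolynomial.totalDegree_mul _ _).trans ?_
    simp
  nlinarith


/-- The Jacobian matrix as a function of the direction and the Gaussian tuple. -/
noncomputable def jmat {k n : ℕ} (p : Fin k → MvPolynomial (Fin n) ℝ) (u : Fin (k + 1) → ℝ)
    (Z : Fin (k + 1) → Fin n → ℝ) : Matrix (Fin (k + 1)) (Fin (k + 1)) ℝ :=
  Fin.cons u (fun i a =>
    ∑ l, MvPolynomial.eval (linZ u Z) (MvPolynomial.pderiv l (p i)) * Z a l)

open Classical in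
/-- The integrand. -/
noncomputable def gfun {k n : ℕ} (p : Fin k → MvPolynomial (Fin n) ℝ) (ε : Fin k → ℝ)
    (u : Fin (k + 1) → ℝ) (Z : Fin (k + 1) → Fin n → ℝ) : ENNReal :=
  if ∀ i, |MvPolynomial.eval (linZ u Z) (p i)| < ε i then ENNReal.ofReal |(jmat p u Z).det| else 0

lemma jmat_eq {k n : ℕ} (p : Fin k → MvPolynomial (Fin n) ℝ) (u : Fin (k + 1) → ℝ)
    (Z : Fin (k + 1) → Fin n → ℝ) : jmat p u Z = jacM (fun i => compZ Z (p i)) u := by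
  ext i j
  refine Fin.cases ?_ (fun i => ?_) i
  · rfl
  · simp only [jmat, jacM, Fin.cons_succ, eval_pderiv_compZ]

lemma continuous_linZ {m n : ℕ} :
    Continuous fun x : (Fin m → ℝ) × (Fin m → Fin n → ℝ) => linZ x.1 x.2 := by
  unfold linZ; fun_prop

lemma measurable_gfun {k n : ℕ} (p : Fin k → MvPolynomial (Fin n) ℝ) (ε : Fin k → ℝ) :
    Measurable (fun x : (Fin (k + 1) → ℝ) × (Fin (k + 1) → Fin n → ℝ) => gfun p ε x.1 x.2) := by
  have hc : ∀ q : MvPolynomial (Fin n) ℝ, Continuous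
      fun x : (Fin (k + 1) → ℝ) × (Fin (k + 1) → Fin n → ℝ) =>
        MvPolynomial.eval (linZ x.1 x.2) q := fun q =>
    (MvPolynomial.continuous_eval q).comp continuous_linZ
  unfold gfun
  apply Measurable.ite
  · have : {x : (Fin (k + 1) → ℝ) × (Fin (k + 1) → Fin n → ℝ) |
        ∀ i, |MvPolynomial.eval (linZ x.1 x.2) (p i)| < ε i} =
        ⋂ i, {x | |MvPolynomial.eval (linZ x.1 x.2) (p i)| < ε i} := by
      ext x; simp
    rw [this]
    exact MeasurableSet.iInter fun i =>
      (isOpen_lt (hc (p i)).abs continuous_const).measurableSet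
  · apply ENNReal.measurable_ofReal.comp
    apply Continuous.measurable
    apply Continuous.abs
    apply Continuous.matrix_det
    refine continuous_matrix fun i j => ?_
    refine Fin.cases ?_ (fun i => ?_) i
    · exact (continuous_apply j).comp continuous_fst
    · simp only [jmat, Fin.cons_succ]
      refine continuous_finsetSum _ fun l _ => (hc _).mul ?_
      fun_prop
  · exact measurable_const

/-- first basis vector -/
def e0 (k : ℕ) : Fin (k + 1) → ℝ := Pi.single 0 1

lemma linZ_e0 {k n : ℕ} (Z : Fin (k + 1) → Fin n → ℝ) : linZ (e0 k) Z = Z 0 := by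
  funext l
  simp [linZ, e0, Pi.single_apply]

lemma gfun_rot {k n : ℕ} (p : Fin k → MvPolynomial (Fin n) ℝ) (ε : Fin k → ℝ)
    (u : Fin (k + 1) → ℝ) (W : Fin (k + 1) → Fin n → ℝ)
    (Q : Matrix (Fin (k + 1)) (Fin (k + 1)) ℝ) (h1 : Q * Q.transpose = 1)
    (h2 : Q.transpose * Q = 1) (h3 : ∀ a, Q a 0 = u a) :
    gfun p ε u (rotL Q W) = gfun p ε (e0 k) W := by
  have hlin : linZ u (rotL Q W) = linZ (e0 k) W := by
    rw [linZ_e0]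
    funext l
    have h4 : ∀ b, ∑ a, Q a b * Q a 0 = if b = 0 then 1 else 0 := by
      intro b
      have := congrFun (congrFun h2 b) 0
      simpa [Matrix.mul_apply, Matrix.one_apply] using this
    simp only [linZ, rotL_apply, Finset.sum_mul]
    rw [Finset.sum_comm]
    calc ∑ b, ∑ a, Q a b * W b l * u a = ∑ b, W b l * ∑ a, Q a b * Q a 0 := by
          refine Finset.sum_congr rfl fun b _ => ?_
          rw [Finset.mul_sum]
          refine Finset.sum_congr rfl fun a _ => ?_
          rw [h3]; ring
      _ = W 0 l := by simp [h4]
  have hmat : jmat p u (rotL Q W) = jmat p (e0 k) W * Q.transpose := by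
    ext i j
    rw [Matrix.mul_apply]
    refine Fin.cases ?_ (fun i => ?_) i
    · simp [jmat, e0, Pi.single_apply, h3]
    · simp only [jmat, Fin.cons_succ, hlin, rotL_apply, Matrix.transpose_apply, Finset.mul_sum,
        Finset.sum_mul]
      rw [Finset.sum_comm]
      refine Finset.sum_congr rfl fun b _ => Finset.sum_congr rfl fun l _ => by ring
  have hdetQ : |Q.det| = 1 := by
    have := congrArg Matrix.det h1
    rw [Matrix.det_mul, Matrix.det_transpose, Matrix.det_one] at this
    have h5 : |Q.det| * |Q.det| = 1 := by rw [← abs_mul, this, abs_one]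
    nlinarith [abs_nonneg Q.det]
  unfold gfun
  rw [hlin, hmat, Matrix.det_mul, Matrix.det_transpose, abs_mul, hdetQ, mul_one]

lemma measurable_gfun_right {k n : ℕ} (p : Fin k → MvPolynomial (Fin n) ℝ) (ε : Fin k → ℝ)
    (u : Fin (k + 1) → ℝ) :
    Measurable (fun Z : Fin (k + 1) → Fin n → ℝ => gfun p ε u Z) := by
  have h : Measurable (fun Z : Fin (k + 1) → Fin n → ℝ => (u, Z)) :=
    measurable_const.prodMk measurable_id
  have h2 := Measurable.comp (measurable_gfun p ε) h
  exact h2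

/-- tuple of standard Gaussians -/
noncomputable def gaussM (m n : ℕ) : Measure (Fin m → Fin n → ℝ) :=
  Measure.pi fun _ : Fin m => _root_.stdGaussian n

instance instProbGaussM (m n : ℕ) : IsProbabilityMeasure (gaussM m n) := by
  unfold gaussM; infer_instance

lemma lintegral_gfun {k n : ℕ} (p : Fin k → MvPolynomial (Fin n) ℝ) (ε : Fin k → ℝ)
    (u : Fin (k + 1) → ℝ) (hu : ∑ a, u a ^ 2 = 1) :
    ∫⁻ Z, gfun p ε u Z ∂(gaussM (k + 1) n) = ∫⁻ Z, gfun p ε (e0 k) Z ∂(gaussM (k + 1) n) := by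
  obtain ⟨Q, h1, h2, h3⟩ := exists_rot u hu
  have hr : (gaussM (k + 1) n).map (rotL Q) = gaussM (k + 1) n := gauss_rot Q h1
  have hrm : Measurable (rotL (n := n) Q) := (rotL Q).continuous.measurable
  have h4 := lintegral_map (μ := gaussM (k + 1) n) (measurable_gfun_right p ε u) hrm
  rw [hr] at h4
  rw [h4]
  exact lintegral_congr fun W => gfun_rot p ε u W Q h1 h2 h3

lemma det_jmat_e0 {k n : ℕ} (p : Fin k → MvPolynomial (Fin n) ℝ) (W : Fin (k + 1) → Fin n → ℝ) :
    (jmat p (e0 k) W).det = Matrix.det (Matrix.of fun i j : Fin k =>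
            ∑ l, MvPolynomial.eval (W 0) (MvPolynomial.pderiv l (p i)) * W j.succ l) := by
  rw [Matrix.det_succ_row_zero, Finset.sum_eq_single 0]
  · have h1 : jmat p (e0 k) W 0 0 = 1 := by simp [jmat, e0]
    rw [h1]
    simp only [Fin.val_zero, pow_zero, one_mul]
    congr 1
    ext i j
    rw [Matrix.submatrix_apply]
    simp only [jmat, Fin.cons_succ, Fin.succAbove_zero, linZ_e0, Matrix.of_apply]
  · intro b _ hb
    have : jmat p (e0 k) W 0 b = 0 := by simp [jmat, e0, hb]
    rw [this]; ring
  · simp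

lemma main_bound {k n : ℕ} (d : Fin k → ℕ) (p : Fin k → MvPolynomial (Fin n) ℝ)
    (hd : ∀ i, 1 ≤ d i) (hdeg : ∀ i, (p i).totalDegree ≤ d i) (ε : Fin k → ℝ)
    (hε : ∀ i, 0 < ε i) :
    ENNReal.ofReal (Real.pi ^ (((k : ℝ) + 1) / 2) / Real.Gamma (((k : ℝ) + 1) / 2 + 1)) *
    ∫⁻ Z, gfun p ε (e0 k) Z ∂(gaussM (k + 1) n) ≤
    ((2 * ∏ i, d i : ℕ) : ENNReal) * ENNReal.ofReal ((∏ i, (2 * ε i)) / (k + 1)) := by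
  have hnm := (continuous_nrm (m := k + 1)).measurable
  set B : Set (Fin (k + 1) → ℝ) := {u | 0 < nrm u ∧ nrm u < 1} with hB
  have hBm : MeasurableSet B :=
    (measurableSet_lt measurable_const hnm).inter (measurableSet_lt hnm measurable_const)
  set μ := gaussM (k + 1) n with hμ
  calc _ = ∫⁻ u in B, ∫⁻ Z, gfun p ε (e0 k) Z ∂μ := by
        rw [setLIntegral_const, hB, volume_unit_ball, mul_comm]
    _ = ∫⁻ u in B, ∫⁻ Z, gfun p ε (nmz u) Z ∂μ := by
        refine setLIntegral_congr_fun hBm fun u hu => ?_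
        exact (lintegral_gfun p ε (nmz u) (sum_nmz_sq hu.1)).symm
    _ = ∫⁻ Z, (∫⁻ u in B, gfun p ε (nmz u) Z) ∂μ := by
        apply lintegral_lintegral_swap
        apply Measurable.aemeasurable
        have h1 : Measurable fun x : (Fin (k + 1) → ℝ) × (Fin (k + 1) → Fin n → ℝ) =>
            (nmz x.1, x.2) := (measurable_nmz.comp measurable_fst).prodMk measurable_snd
        have h2 := Measurable.comp (measurable_gfun p ε) h1
        exact h2
    _ ≤ ∫⁻ Z, ((2 * ∏ i, d i : ℕ) : ENNReal) * ENNReal.ofReal ((∏ i, (2 * ε i)) / (k + 1)) ∂μ := by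
        apply lintegral_mono
        intro Z
        have := sphere_lemma (fun i => compZ Z (p i)) d hd
          (fun i => (totalDegree_compZ Z (p i)).trans (hdeg i)) ε hε
        simp only [eval_compZ, ← jmat_eq] at this
        exact this
    _ = _ := by simp

lemma pre_bound {k n : ℕ} (p : Fin k → MvPolynomial (Fin n) ℝ) (ε : Fin k → ℝ) (δ : ℝ)
    (E : Set ((Fin n → ℝ) × (Fin k → Fin n → ℝ)))
    (hE : ∀ ω ∈ E, (∀ i, |MvPolynomial.eval ω.1 (p i)| < ε i) ∧
          δ < |Matrix.det (Matrix.of fun i j : Fin k =>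
            ∑ l, MvPolynomial.eval ω.1 (MvPolynomial.pderiv l (p i)) * ω.2 j l)|) :
    ((_root_.stdGaussian n).prod (Measure.pi fun _ : Fin k => _root_.stdGaussian n)) E ≤
      gaussM (k + 1) n {W | ENNReal.ofReal δ ≤ gfun p ε (e0 k) W} := by
  have hmp := measurePreserving_piFinSuccAbove (fun _ : Fin (k + 1) => _root_.stdGaussian n) 0
  have h1 := hmp.measure_preimage_equiv E
  refine h1.symm.le.trans (measure_mono ?_)
  intro W hW
  obtain ⟨h2, h3⟩ := hE _ hW
  have h2' : ∀ i, |MvPolynomial.eval (W 0) (p i)| < ε i := h2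
  have h3' : δ < |Matrix.det (Matrix.of fun i j : Fin k =>
            ∑ l, MvPolynomial.eval (W 0) (MvPolynomial.pderiv l (p i)) * W j.succ l)| := h3
  change ENNReal.ofReal δ ≤ gfun p ε (e0 k) W
  unfold gfun
  rw [linZ_e0, det_jmat_e0, if_pos h2']
  exact ENNReal.ofReal_le_ofReal h3'.le

lemma final_arith {k : ℕ} (d : Fin k → ℕ) (ε : Fin k → ℝ) (δ : ℝ) (hδ : 0 < δ)
    (hε : ∀ i, 0 < ε i) (P I : ENNReal) (hmarkov : ENNReal.ofReal δ * P ≤ I)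
    (hmain : ENNReal.ofReal (Real.pi ^ (((k : ℝ) + 1) / 2) /
      Real.Gamma (((k : ℝ) + 1) / 2 + 1)) * I ≤
      ((2 * ∏ i, d i : ℕ) : ENNReal) * ENNReal.ofReal ((∏ i, (2 * ε i)) / (k + 1))) :
    P ≤ ENNReal.ofReal (2 ^ (k + 1) * (∏ i, (d i : ℝ)) * (∏ i, ε i) /
        (δ * (2 * Real.pi ^ (((k : ℝ) + 1) / 2) / Real.Gamma (((k : ℝ) + 1) / 2)))) := by
  have hG : 0 < Real.Gamma (((k : ℝ) + 1) / 2) := Real.Gamma_pos_of_pos (by positivity)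
  have hpi : 0 < Real.pi ^ (((k : ℝ) + 1) / 2) := Real.rpow_pos_of_pos Real.pi_pos _
  have hGa : Real.Gamma (((k : ℝ) + 1) / 2 + 1) = (((k : ℝ) + 1) / 2) *
      Real.Gamma (((k : ℝ) + 1) / 2) := Real.Gamma_add_one (by positivity)
  rw [hGa] at hmain
  have h3 := (mul_le_mul_right hmarkov (ENNReal.ofReal (Real.pi ^ (((k : ℝ) + 1) / 2) /
    ((((k : ℝ) + 1) / 2) * Real.Gamma (((k : ℝ) + 1) / 2))))).trans hmain
  have hvpos : 0 < Real.pi ^ (((k : ℝ) + 1) / 2) /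
    ((((k : ℝ) + 1) / 2) * Real.Gamma (((k : ℝ) + 1) / 2)) := by positivity
  rw [← mul_assoc, ← ENNReal.ofReal_mul hvpos.le, ← ENNReal.ofReal_natCast,
    ← ENNReal.ofReal_mul (by positivity), mul_comm,
    ← ENNReal.le_div_iff_mul_le (Or.inl (ENNReal.ofReal_pos.2 (by positivity)).ne')
      (Or.inl ENNReal.ofReal_ne_top), ← ENNReal.ofReal_div_of_pos (by positivity)] at h3
  refine h3.trans (le_of_eq ?_)
  congr 1
  rw [Finset.prod_mul_distrib, Finset.prod_const, Finset.card_univ, Fintype.card_fin]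
  push_cast
  field_simp
  ring

theorem strong_anticoncentration_lemma (k : ℕ) (hk : 0 < k) (n : ℕ)
    (d : Fin k → ℕ) (p : Fin k → MvPolynomial (Fin n) ℝ)
    (hdeg : ∀ i, (p i).totalDegree ≤ d i)
    (δ : ℝ) (hδ : 0 < δ) (ε : Fin k → ℝ) (hε : ∀ i, 0 < ε i) :
    ((stdGaussian n).prod (Measure.pi fun _ : Fin k => stdGaussian n))
        {ω | (∀ i, |MvPolynomial.eval ω.1 (p i)| < ε i) ∧
          δ < |Matrix.det (Matrix.of fun i j : Fin k =>
            ∑ l, MvPolynomial.eval ω.1 (MvPolynomial.pderiv l (p i)) * ω.2 j l)|} ≤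
      ENNReal.ofReal (2 ^ (k + 1) * (∏ i, (d i : ℝ)) * (∏ i, ε i) /
        (δ * (2 * Real.pi ^ (((k : ℝ) + 1) / 2) / Real.Gamma (((k : ℝ) + 1) / 2)))) := by
  set E : Set ((Fin n → ℝ) × (Fin k → Fin n → ℝ)) :=
    {ω | (∀ i, |MvPolynomial.eval ω.1 (p i)| < ε i) ∧
          δ < |Matrix.det (Matrix.of fun i j : Fin k =>
            ∑ l, MvPolynomial.eval ω.1 (MvPolynomial.pderiv l (p i)) * ω.2 j l)|} with hE
  by_cases hd : ∀ i, 1 ≤ d i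
  swap
  · push Not at hd
    obtain ⟨i, hi⟩ := hd
    have hE0 : E = ∅ := by
      rw [Set.eq_empty_iff_forall_notMem]
      rintro ω ⟨_, h⟩
      have h0 : (p i).totalDegree = 0 := by have := hdeg i; omega
      rw [MvPolynomial.totalDegree_eq_zero_iff_eq_C] at h0
      rw [Matrix.det_eq_zero_of_row_eq_zero i] at h
      · rw [abs_zero] at h; linarith
      · intro j
        rw [Matrix.of_apply]
        apply Finset.sum_eq_zero
        intro l _
        rw [h0]
        simp
    rw [hE0, measure_empty]
    exact zero_le
  refine (pre_bound p ε δ E fun ω hω => hω).trans ?_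
  exact final_arith d ε δ hδ hε _ _
    (mul_meas_ge_le_lintegral (measurable_gfun_right p ε (e0 k)) (ENNReal.ofReal δ))
    (main_bound d p hd hdeg ε hε)
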